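/- Let p ≥ 1, let ν be a finite signed Borel measure on [0,∞), let f : [0,∞) → ℝ be locally integrable, and let r be the differential resolvent of ν; assume r ∈ L¹([0,∞)). If for every θ ∈ (0,1] the function t ↦ ∫_t^{t+θ} f(s) ds belongs to L^p([0,∞)), then for every ξ ∈ ℝ the function x(t) = r(t) ξ + ∫_0^t r(t−s) f(s) ds belongs to L^p([0,∞)). -/

import Mathlib

open MeasureTheory Set Filter

/-- The integral of `g` over the set `A` against the finite signed Borel measure `ν`,
defined through the Jordan decomposition `ν = ν⁺ - ν⁻`. -/
noncomputable def signedSetIntegral (ν : MeasureTheory.SignedMeasure ℝ) (g : ℝ → ℝ)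
    (A : Set ℝ) : ℝ :=
  (∫ s in A, g s ∂ν.toJordanDecomposition.posPart)
    - ∫ s in A, g s ∂ν.toJordanDecomposition.negPart

/-!
Put `F t = ∫₀ᵗ f`. The function `θ ↦ ‖F (· + θ) - F‖_p` is lower semicontinuous and finite on
`(0, 1)`, so by the Baire category theorem it is bounded on some interval `[a, b]`. Averaging
`F (t + θ) - F t` over `θ ∈ [a, b]` gives `G ∈ L^p`, and `F = F 0 + ∫₀ᵗ g + (G 0 - G)`, where
`g t = (F (t + b) - F (t + a)) / (b - a)` is again in `L^p`; formally `f = g - G'`. Since `r ∈ L¹`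
and the resolvent equation bounds `‖r'‖₁` by the total variation of `ν` times `‖r‖₁`, integration
by parts moves the derivative from `G` to `r`, and
`x = r • (ξ + G 0) + r ∗ g - r 0 • G - r' ∗ G` is in `L^p` by Young's inequality.
-/

open scoped ENNReal Convolution

section Minkowski

variable {α β : Type*} [MeasurableSpace α] [MeasurableSpace β]

theorem rpow_lintegral_le_measure_univ_rpow_mul {μ : Measure β} {h : β → ℝ≥0∞}
    (hh : AEMeasurable h μ) {q : ℝ} (hq : 1 ≤ q) :
    (∫⁻ s, h s ∂μ) ^ q ≤ μ univ ^ (q - 1) * ∫⁻ s, h s ^ q ∂μ := by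
  have hq0 : 0 < q := by linarith
  have holder : ∫⁻ s, h s ∂μ ≤ (∫⁻ s, h s ^ q ∂μ) ^ (1 / q) * μ univ ^ (1 - 1 / q) := by
    simpa [eLpNorm'] using
      eLpNorm'_le_eLpNorm'_mul_rpow_measure_univ one_pos hq hh.aestronglyMeasurable
  calc (∫⁻ s, h s ∂μ) ^ q
      ≤ ((∫⁻ s, h s ^ q ∂μ) ^ (1 / q) * μ univ ^ (1 - 1 / q)) ^ q := by gcongr
    _ = μ univ ^ (q - 1) * ∫⁻ s, h s ^ q ∂μ := by
        rw [ENNReal.mul_rpow_of_nonneg _ _ hq0.le, ← ENNReal.rpow_mul, ← ENNReal.rpow_mul,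
          one_div_mul_cancel hq0.ne', ENNReal.rpow_one, sub_mul, one_mul,
          one_div_mul_cancel hq0.ne', mul_comm]

variable {l : Measure α} {μ : Measure β} [SFinite l] [SFinite μ] {H : α → β → ℝ≥0∞} {C : ℝ≥0∞}

theorem lintegral_rpow_lintegral_le {q : ℝ} (hq : 1 ≤ q)
    (hH : AEMeasurable (Function.uncurry H) (l.prod μ))
    (hC : ∀ᵐ s ∂μ, ∫⁻ t, H t s ^ q ∂l ≤ C ^ q) :
    ∫⁻ t, (∫⁻ s, H t s ∂μ) ^ q ∂l ≤ (μ univ * C) ^ q := by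
  have hq0 : 0 ≤ q - 1 := by linarith
  calc ∫⁻ t, (∫⁻ s, H t s ∂μ) ^ q ∂l
      ≤ ∫⁻ t, μ univ ^ (q - 1) * ∫⁻ s, H t s ^ q ∂μ ∂l := by
        refine lintegral_mono_ae ?_
        filter_upwards [hH.aestronglyMeasurable.prodMk_left] with t ht
        exact rpow_lintegral_le_measure_univ_rpow_mul ht.aemeasurable hq
    _ = μ univ ^ (q - 1) * ∫⁻ t, ∫⁻ s, H t s ^ q ∂μ ∂l :=
        lintegral_const_mul'' _ (hH.pow_const q).lintegral_prod_right'
    _ = μ univ ^ (q - 1) * ∫⁻ s, ∫⁻ t, H t s ^ q ∂l ∂μ := by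
        rw [lintegral_lintegral_swap (hH.pow_const q)]
    _ ≤ μ univ ^ (q - 1) * ∫⁻ _, C ^ q ∂μ := by
        gcongr 1
        exact lintegral_mono_ae hC
    _ = (μ univ * C) ^ q := by
        rw [lintegral_const, mul_comm (C ^ q), ← mul_assoc,
          ENNReal.mul_rpow_of_nonneg _ _ (by linarith)]
        nth_rw 2 [← ENNReal.rpow_one (μ univ)]
        rw [← ENNReal.rpow_add_of_nonneg _ _ hq0 zero_le_one, sub_add_cancel]

theorem ae_lintegral_le_measure_univ_mul (hH : AEMeasurable (Function.uncurry H) (l.prod μ))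
    (hC : ∀ᵐ s ∂μ, ∀ᵐ t ∂l, H t s ≤ C) :
    ∀ᵐ t ∂l, ∫⁻ s, H t s ∂μ ≤ μ univ * C := by
  have excess_meas : AEMeasurable (Function.uncurry fun t s => H t s - C) (l.prod μ) :=
    hH.sub_const C
  have excess_eq_zero : ∫⁻ t, ∫⁻ s, (H t s - C) ∂μ ∂l = 0 := by
    rw [lintegral_lintegral_swap excess_meas, lintegral_eq_zero_of_ae_eq_zero]
    filter_upwards [hC] with s hs
    refine lintegral_eq_zero_of_ae_eq_zero ?_
    filter_upwards [hs] with t ht using tsub_eq_zero_of_le ht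
  filter_upwards [(lintegral_eq_zero_iff' excess_meas.lintegral_prod_right').1 excess_eq_zero]
    with t ht
  calc ∫⁻ s, H t s ∂μ ≤ ∫⁻ s, (C + (H t s - C)) ∂μ := lintegral_mono fun s => le_add_tsub
    _ = μ univ * C := by
        rw [lintegral_add_left measurable_const, lintegral_const, show ∫⁻ s, (H t s - C) ∂μ = 0
          from ht, add_zero, mul_comm]

theorem eLpNorm_lintegral_le_measure_univ_mul {p : ℝ≥0∞} (hp : 1 ≤ p)
    (hH : AEMeasurable (Function.uncurry H) (l.prod μ))
    (hC : ∀ᵐ s ∂μ, eLpNorm (fun t => H t s) p l ≤ C) :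
    eLpNorm (fun t => ∫⁻ s, H t s ∂μ) p l ≤ μ univ * C := by
  rcases eq_or_ne p ∞ with rfl | hp_top
  · simp only [eLpNorm_exponent_top, eLpNormEssSup, enorm_eq_self] at hC ⊢
    refine essSup_le_of_ae_le _ (ae_lintegral_le_measure_univ_mul hH ?_)
    filter_upwards [hC] with s hs
    filter_upwards [ENNReal.ae_le_essSup fun t => H t s] with t ht using ht.trans hs
  · have hq : 1 ≤ p.toReal := (ENNReal.toReal_mono hp_top hp).trans_eq' ENNReal.toReal_one.symm
    have hq0 : 0 < p.toReal := by linarith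
    simp only [eLpNorm_eq_lintegral_rpow_enorm_toReal (one_pos.trans_le hp).ne' hp_top,
      enorm_eq_self, one_div, ENNReal.rpow_inv_le_iff hq0] at hC ⊢
    exact lintegral_rpow_lintegral_le hq hH hC

theorem memLp_integral_of_eLpNorm_le {E : Type*} [NormedAddCommGroup E] [NormedSpace ℝ E]
    [IsFiniteMeasure μ] {p : ℝ≥0∞} (hp : 1 ≤ p) {K : α → β → E}
    (hK : AEStronglyMeasurable (Function.uncurry K) (l.prod μ)) (hC_top : C ≠ ∞)
    (hC : ∀ᵐ s ∂μ, eLpNorm (fun t => K t s) p l ≤ C) :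
    MemLp (fun t => ∫ s, K t s ∂μ) p l := by
  refine ⟨hK.integral_prod_right', ?_⟩
  calc eLpNorm (fun t => ∫ s, K t s ∂μ) p l ≤ eLpNorm (fun t => ∫⁻ s, ‖K t s‖ₑ ∂μ) p l :=
        eLpNorm_mono_enorm fun t => enorm_integral_le_lintegral_enorm _
    _ ≤ μ univ * C := eLpNorm_lintegral_le_measure_univ_mul hp hK.enorm (by simpa using hC)
    _ < ∞ := ENNReal.mul_lt_top (measure_lt_top μ univ) hC_top.lt_top

end Minkowski

section Young

variable {G : Type*} [MeasurableSpace G] [AddGroup G] [MeasurableAdd₂ G] [MeasurableNeg G]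
  {l : Measure G} [SFinite l] [l.IsAddRightInvariant] {p : ℝ≥0∞}

theorem eLpNorm_lintegral_enorm_sub_le {E : Type*} [NormedAddCommGroup E] (hp : 1 ≤ p) {h : G → E}
    (hh : AEStronglyMeasurable h l) (μ : Measure G) [SFinite μ] :
    eLpNorm (fun t => ∫⁻ s, ‖h (t - s)‖ₑ ∂μ) p l ≤ μ univ * eLpNorm h p l := by
  refine eLpNorm_lintegral_le_measure_univ_mul hp
    (hh.comp_quasiMeasurePreserving
      (quasiMeasurePreserving_sub_of_right_invariant l μ)).enorm (ae_of_all _ fun s => ?_)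
  rw [eLpNorm_enorm]
  exact (eLpNorm_comp_measurePreserving hh (measurePreserving_sub_right l s)).le

theorem memLp_convolution {𝕜 E E' F : Type*} [NontriviallyNormedField 𝕜]
    [NormedAddCommGroup E] [NormedSpace 𝕜 E] [NormedAddCommGroup E'] [NormedSpace 𝕜 E']
    [NormedAddCommGroup F] [NormedSpace ℝ F] [NormedSpace 𝕜 F] (hp : 1 ≤ p)
    (L : E →L[𝕜] E' →L[𝕜] F) {k : G → E} {h : G → E'} (hk : Integrable k l) (hh : MemLp h p l) :
    MemLp (k ⋆[L, l] h) p l := by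
  refine ⟨(hk.1.convolution_integrand L hh.1).integral_prod_right', ?_⟩
  let μ : Measure G := l.withDensity fun s => ‖L‖ₑ * ‖k s‖ₑ
  have hμ : μ univ < ∞ := by
    simpa [μ, lintegral_const_mul'' _ hk.1.enorm] using ENNReal.mul_lt_top enorm_lt_top hk.2
  have : IsFiniteMeasure μ := ⟨hμ⟩
  refine lt_of_le_of_lt (eLpNorm_mono_enorm_ae ?_)
    ((eLpNorm_lintegral_enorm_sub_le hp hh.1 μ).trans_lt (ENNReal.mul_lt_top hμ hh.2))
  have h_sec : ∀ᵐ t ∂l, AEStronglyMeasurable (fun s => h (t - s)) l :=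
    (hh.1.comp_quasiMeasurePreserving
      (quasiMeasurePreserving_sub_of_right_invariant l l)).prodMk_left
  filter_upwards [h_sec] with t ht
  rw [enorm_eq_self, lintegral_withDensity_eq_lintegral_mul₀ (hk.1.enorm.const_mul _) ht.enorm]
  exact (enorm_integral_le_lintegral_enorm _).trans
    (lintegral_mono fun s => L.le_opENorm₂ (k s) (h (t - s)))

end Young

section HalfLine

variable {E : Type*} [NormedAddCommGroup E] [NormedSpace ℝ E] {p : ℝ≥0∞}

theorem memLp_integral_smul_sub (hp : 1 ≤ p) {k : ℝ → ℝ} {h : ℝ → E}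
    (hk : IntegrableOn k (Ici 0)) (hh : MemLp h p (volume.restrict (Ici 0))) :
    MemLp (fun t => ∫ s in (0 : ℝ)..t, k s • h (t - s)) p (volume.restrict (Ici 0)) := by
  rw [IntegrableOn] at hk
  rw [← restrict_Ioi_eq_restrict_Ici] at hk hh ⊢
  rw [← memLp_indicator_iff_restrict measurableSet_Ioi] at hh ⊢
  have h_conv := memLp_convolution hp (ContinuousLinearMap.lsmul ℝ ℝ)
    (IntegrableOn.integrable_indicator hk measurableSet_Ioi) hh
  rwa [← posConvolution_eq_convolution_indicator k h (.lsmul ℝ ℝ) volume] at h_conv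

theorem memLp_of_memLp_one_of_memLp_top {α F : Type*} [MeasurableSpace α] [NormedAddCommGroup F]
    {μ : Measure α} {h : α → F} (h_one : MemLp h 1 μ) (h_top : MemLp h ∞ μ) (hp : 1 ≤ p) :
    MemLp h p μ := by
  rcases eq_or_ne p ∞ with rfl | hp_top
  · exact h_top
  have hq : 0 ≤ p.toReal - 1 :=
    sub_nonneg.2 ((ENNReal.toReal_mono hp_top hp).trans_eq' ENNReal.toReal_one.symm)
  refine ⟨h_one.1, (eLpNorm_lt_top_iff_lintegral_rpow_enorm_lt_top
    (one_pos.trans_le hp).ne' hp_top).2 ?_⟩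
  let M := eLpNormEssSup h μ
  have hM : M < ∞ := by simpa only [eLpNorm_exponent_top] using h_top.2
  calc ∫⁻ t, ‖h t‖ₑ ^ p.toReal ∂μ ≤ ∫⁻ t, M ^ (p.toReal - 1) * ‖h t‖ₑ ∂μ := by
        refine lintegral_mono_ae ?_
        filter_upwards [enorm_ae_le_eLpNormEssSup h μ] with t ht
        calc ‖h t‖ₑ ^ p.toReal = ‖h t‖ₑ ^ (p.toReal - 1) * ‖h t‖ₑ := by
              nth_rw 3 [← ENNReal.rpow_one ‖h t‖ₑ]
              rw [← ENNReal.rpow_add_of_nonneg _ _ hq zero_le_one, sub_add_cancel]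
          _ ≤ M ^ (p.toReal - 1) * ‖h t‖ₑ := by gcongr
    _ = M ^ (p.toReal - 1) * ∫⁻ t, ‖h t‖ₑ ∂μ := lintegral_const_mul'' _ h_one.1.enorm
    _ < ∞ := ENNReal.mul_lt_top (ENNReal.rpow_lt_top_of_nonneg hq hM.ne)
        (memLp_one_iff_integrable.1 h_one).2

theorem memLp_of_integrableOn_of_integrableOn_deriv (hp : 1 ≤ p) {r k : ℝ → E}
    (hr : IntegrableOn r (Ici 0)) (hk : IntegrableOn k (Ici 0))
    (hrk : ∀ t ≥ 0, r t = r 0 + ∫ s in (0 : ℝ)..t, k s) :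
    MemLp r p (volume.restrict (Ici 0)) := by
  refine memLp_of_memLp_one_of_memLp_top (memLp_one_iff_integrable.2 hr) ?_ hp
  refine memLp_top_of_bound hr.1 (‖r 0‖ + ∫ s in Ici (0 : ℝ), ‖k s‖) ?_
  filter_upwards [ae_restrict_mem measurableSet_Ici] with t ht
  calc ‖r t‖ ≤ ‖r 0‖ + ‖∫ s in (0 : ℝ)..t, k s‖ := hrk t ht ▸ norm_add_le _ _
    _ ≤ ‖r 0‖ + ∫ s in Ioc 0 t, ‖k s‖ := by
        gcongr
        exact intervalIntegral.norm_integral_le_integral_norm ht |>.trans_eq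
          (intervalIntegral.integral_of_le ht)
    _ ≤ ‖r 0‖ + ∫ s in Ici (0 : ℝ), ‖k s‖ := by
        gcongr
        · exact ae_of_all _ fun s => norm_nonneg _
        · exact hk.norm
        · exact Ioc_subset_Icc_self.trans Icc_subset_Ici_self

theorem intervalIntegral_eq_setIntegral_indicator {q : ℝ → E} {s t : ℝ} (hs : 0 ≤ s)
    (hst : s ≤ t) : ∫ u in (0 : ℝ)..s, q u = ∫ u in Ioc 0 t, (Iic s).indicator q u := by
  rw [intervalIntegral.integral_of_le hs, setIntegral_indicator measurableSet_Iic, Ioc_inter_Iic,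
    min_eq_right hst]

variable [CompleteSpace E]

-- Fubini on the triangle `{(s, u) | 0 < s, 0 < u, s + u ≤ t}`.
theorem integral_primitive_sub_smul {k : ℝ → ℝ} {φ : ℝ → E} {t : ℝ} (ht : 0 ≤ t)
    (hk : IntervalIntegrable k volume 0 t) (hφ : IntervalIntegrable φ volume 0 t) :
    ∫ s in (0 : ℝ)..t, (∫ u in (0 : ℝ)..(t - s), k u) • φ s =
      ∫ u in (0 : ℝ)..t, k u • ∫ s in (0 : ℝ)..(t - u), φ s := by
  let T : Set (ℝ × ℝ) := {z | z.1 + z.2 ≤ t}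
  let W : ℝ → ℝ → E := fun s u => T.indicator (fun z => k z.2 • φ z.1) (s, u)
  have hT : MeasurableSet T :=
    measurableSet_le (measurable_fst.add measurable_snd) measurable_const
  have hW : Integrable (Function.uncurry W)
      ((volume.restrict (Ioc 0 t)).prod (volume.restrict (Ioc 0 t))) :=
    (Integrable.smul_prod hk.1 hφ.1).swap.indicator hT
  have h_left : ∀ s ∈ Ioc 0 t,
      (∫ u in (0 : ℝ)..(t - s), k u) • φ s = ∫ u in Ioc 0 t, W s u := fun s hs => by
    rw [← intervalIntegral.integral_smul_const, intervalIntegral_eq_setIntegral_indicator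
      (sub_nonneg.2 hs.2) (sub_le_self t hs.1.le)]
    simp only [W, T, indicator, mem_Iic, mem_ofPred_eq, le_sub_iff_add_le']
  have h_right : ∀ u ∈ Ioc 0 t,
      k u • ∫ s in (0 : ℝ)..(t - u), φ s = ∫ s in Ioc 0 t, W s u := fun u hu => by
    rw [← intervalIntegral.integral_smul, intervalIntegral_eq_setIntegral_indicator
      (sub_nonneg.2 hu.2) (sub_le_self t hu.1.le)]
    simp only [W, T, indicator, mem_Iic, mem_ofPred_eq, le_sub_iff_add_le]
  rw [intervalIntegral.integral_of_le ht, intervalIntegral.integral_of_le ht,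
    setIntegral_congr_fun measurableSet_Ioc h_left,
    setIntegral_congr_fun measurableSet_Ioc h_right]
  exact integral_integral_swap hW

theorem integral_smul_eq_add_integral_deriv_smul_primitive {r k : ℝ → ℝ} {φ : ℝ → E} {t : ℝ}
    (ht : 0 ≤ t) (hk : IntervalIntegrable k volume 0 t) (hφ : IntervalIntegrable φ volume 0 t)
    (hrk : ∀ u ∈ Icc 0 t, r u = r 0 + ∫ s in (0 : ℝ)..u, k s) :
    ∫ s in (0 : ℝ)..t, r (t - s) • φ s =
      r 0 • (∫ s in (0 : ℝ)..t, φ s) + ∫ u in (0 : ℝ)..t, k u • ∫ s in (0 : ℝ)..(t - u), φ s := by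
  have h_reflect : MapsTo (fun s => t - s) (uIcc 0 t) (Icc 0 t) := fun s hs => by
    rw [uIcc_of_le ht] at hs
    exact ⟨sub_nonneg.2 hs.2, sub_le_self t hs.1⟩
  have h_primitive : ContinuousOn (fun s => ∫ u in (0 : ℝ)..(t - s), k u) (uIcc 0 t) := by
    have := intervalIntegral.continuousOn_primitive_interval' hk left_mem_uIcc
    rw [uIcc_of_le ht] at this
    exact this.comp (by fun_prop) h_reflect
  calc ∫ s in (0 : ℝ)..t, r (t - s) • φ s
      = ∫ s in (0 : ℝ)..t, (r 0 • φ s + (∫ u in (0 : ℝ)..(t - s), k u) • φ s) :=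
        intervalIntegral.integral_congr fun s hs => by
          simp only [hrk _ (h_reflect hs), add_smul]
    _ = r 0 • (∫ s in (0 : ℝ)..t, φ s)
          + ∫ s in (0 : ℝ)..t, (∫ u in (0 : ℝ)..(t - s), k u) • φ s := by
        rw [← intervalIntegral.integral_smul]
        exact intervalIntegral.integral_add (hφ.smul _) (hφ.continuousOn_smul h_primitive)
    _ = _ := by rw [integral_primitive_sub_smul ht hk hφ]

theorem integral_smul_eq_of_primitive_eq {r k : ℝ → ℝ} {f g G : ℝ → E} {t : ℝ} (ht : 0 ≤ t)
    (hk : IntervalIntegrable k volume 0 t) (hf : IntervalIntegrable f volume 0 t)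
    (hg : Continuous g) (hG : Continuous G)
    (hrk : ∀ u ∈ Icc 0 t, r u = r 0 + ∫ s in (0 : ℝ)..u, k s)
    (hfg : ∀ u ∈ Icc 0 t, ∫ s in (0 : ℝ)..u, f s = (∫ s in (0 : ℝ)..u, g s) + (G 0 - G u)) :
    ∫ s in (0 : ℝ)..t, r (t - s) • f s =
      (∫ u in (0 : ℝ)..t, r u • g (t - u)) + r t • G 0 - r 0 • G t
        - ∫ u in (0 : ℝ)..t, k u • G (t - u) := by
  have h_int (h : ℝ → E) (hh : Continuous h) :
      IntervalIntegrable (fun u => k u • h (t - u)) volume 0 t :=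
    hk.smul_continuousOn (by fun_prop)
  have h_split : ∫ u in (0 : ℝ)..t, k u • ∫ s in (0 : ℝ)..(t - u), f s =
      (∫ u in (0 : ℝ)..t, k u • ∫ s in (0 : ℝ)..(t - u), g s)
        + ((∫ u in (0 : ℝ)..t, k u) • G 0 - ∫ u in (0 : ℝ)..t, k u • G (t - u)) := by
    have h_prim := intervalIntegral.continuous_primitive
      (fun a b => hg.intervalIntegrable (μ := volume) a b) 0
    rw [← intervalIntegral.integral_smul_const, ← intervalIntegral.integral_sub
      (h_int (fun _ => G 0) continuous_const) (h_int G hG), ← intervalIntegral.integral_add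
      (h_int _ h_prim) ((h_int (fun _ => G 0) continuous_const).sub (h_int G hG))]
    refine intervalIntegral.integral_congr fun u hu => ?_
    rw [uIcc_of_le ht] at hu
    simp only [hfg (t - u) ⟨sub_nonneg.2 hu.2, sub_le_self t hu.1⟩, smul_add, smul_sub]
  have h_reflect : ∫ s in (0 : ℝ)..t, r (t - s) • g s = ∫ u in (0 : ℝ)..t, r u • g (t - u) := by
    simpa using intervalIntegral.integral_comp_sub_left (a := 0) (b := t)
      (fun u => r u • g (t - u)) t
  rw [← h_reflect, integral_smul_eq_add_integral_deriv_smul_primitive ht hk hf hrk,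
    integral_smul_eq_add_integral_deriv_smul_primitive ht hk (hg.intervalIntegrable 0 t) hrk,
    h_split, hfg t ⟨ht, le_rfl⟩, hrk t ⟨ht, le_rfl⟩]
  module

end HalfLine

section Baire

theorem exists_isOpen_forall_le_of_lowerSemicontinuous {X : Type*} [TopologicalSpace X]
    [BaireSpace X] {N : X → ℝ≥0∞} (hN : LowerSemicontinuous N) {U : Set X} (hU : IsOpen U)
    (hU_ne : U.Nonempty) (hNU : ∀ x ∈ U, N x < ∞) :
    ∃ V ⊆ U, IsOpen V ∧ V.Nonempty ∧ ∃ n : ℕ, ∀ x ∈ V, N x ≤ n := by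
  let A : ℕ → Set X := fun n => N ⁻¹' Iic (n : ℝ≥0∞) ∪ Uᶜ
  have hA_closed : ∀ n, IsClosed (A n) := fun n =>
    (hN.isClosed_preimage _).union hU.isClosed_compl
  have hA_univ : ⋃ n, A n = univ := by
    refine iUnion_eq_univ_iff.2 fun x => ?_
    by_cases hx : x ∈ U
    · obtain ⟨n, hn⟩ := ENNReal.exists_nat_gt (hNU x hx).ne
      exact ⟨n, Or.inl hn.le⟩
    · exact ⟨0, Or.inr hx⟩
  obtain ⟨x, hxU, hx⟩ :=
    (dense_iUnion_interior_of_closed hA_closed hA_univ).inter_open_nonempty U hU hU_ne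
  obtain ⟨n, hxn⟩ := mem_iUnion.1 hx
  refine ⟨U ∩ interior (A n), inter_subset_left, hU.inter isOpen_interior, ⟨x, hxU, hxn⟩, n, ?_⟩
  exact fun y hy => (interior_subset hy.2).resolve_right (not_not_intro hy.1)

theorem lowerSemicontinuous_eLpNorm {X α E : Type*} [TopologicalSpace X] [SequentialSpace X]
    [MeasurableSpace α] [NormedAddCommGroup E] {p : ℝ≥0∞} {μ : Measure α} {H : X → α → E}
    (hH : ∀ x, AEStronglyMeasurable (H x) μ) (hH_cont : ∀ᵐ t ∂μ, Continuous fun x => H x t) :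
    LowerSemicontinuous fun x => eLpNorm (H x) p μ := by
  refine lowerSemicontinuous_iff_isClosed_preimage.2 fun C => IsSeqClosed.isClosed ?_
  intro u x hu hux
  refine (Lp.eLpNorm_lim_le_liminf_eLpNorm (fun n => hH (u n)) (H x) ?_).trans
    (liminf_le_of_le (by isBoundedDefault) fun b hb => ?_)
  · filter_upwards [hH_cont] with t ht using (ht.tendsto x).comp hux
  · obtain ⟨n, hn⟩ := hb.exists
    exact hn.trans (hu n)

end Baire

section Shift

variable {E : Type*} [NormedAddCommGroup E] {p : ℝ≥0∞} {μ : Measure ℝ} {F : ℝ → E} {δ : ℝ}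

theorem exists_Icc_eLpNorm_shift_sub_le (hF : Continuous F) (hδ : 0 < δ)
    (hFp : ∀ θ ∈ Ioo 0 δ, MemLp (fun t => F (t + θ) - F t) p μ) :
    ∃ a > 0, ∃ b > a, b < δ ∧ ∃ n : ℕ,
      ∀ θ ∈ Icc a b, eLpNorm (fun t => F (t + θ) - F t) p μ ≤ n := by
  have h_lsc : LowerSemicontinuous fun θ => eLpNorm (fun t => F (t + θ) - F t) p μ :=
    lowerSemicontinuous_eLpNorm (fun θ => (by fun_prop : Continuous _).aestronglyMeasurable)
      (ae_of_all _ fun t => by fun_prop)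
  obtain ⟨V, hVδ, hV, hV_ne, n, hn⟩ := exists_isOpen_forall_le_of_lowerSemicontinuous h_lsc
    isOpen_Ioo (nonempty_Ioo.2 hδ) fun θ hθ => (hFp θ hθ).2
  obtain ⟨a', b', hab', habV⟩ := hV.exists_Ioo_subset hV_ne
  obtain ⟨a, ha⟩ := exists_between hab'
  obtain ⟨b, hb⟩ := exists_between ha.2
  have hIcc : Icc a b ⊆ V := fun θ hθ => habV ⟨ha.1.trans_le hθ.1, hθ.2.trans_lt hb.2⟩
  exact ⟨a, (hVδ (hIcc (left_mem_Icc.2 hb.1.le))).1, b, hb.1,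
    (hVδ (hIcc (right_mem_Icc.2 hb.1.le))).2, n, fun θ hθ => hn θ (hIcc hθ)⟩

variable [NormedSpace ℝ E]

theorem memLp_intervalIntegral_of_eLpNorm_le [SFinite μ] (hp : 1 ≤ p) {K : ℝ → ℝ → E}
    (hK : Continuous (Function.uncurry K)) {a b : ℝ} (hab : a ≤ b) {C : ℝ≥0∞} (hC_top : C ≠ ∞)
    (hC : ∀ θ ∈ Icc a b, eLpNorm (fun t => K t θ) p μ ≤ C) :
    MemLp (fun t => ∫ θ in a..b, K t θ) p μ := by
  simp only [intervalIntegral.integral_of_le hab]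
  refine memLp_integral_of_eLpNorm_le hp hK.aestronglyMeasurable hC_top ?_
  filter_upwards [ae_restrict_mem measurableSet_Ioc] with θ hθ using hC θ (Ioc_subset_Icc_self hθ)

theorem integral_shift_sub_shift (hF : Continuous F) (a b t : ℝ) :
    ∫ s in (0 : ℝ)..t, (F (s + b) - F (s + a)) =
      (∫ θ in a..b, F (t + θ)) - ∫ θ in a..b, F (0 + θ) := by
  have h_int (c d : ℝ) : IntervalIntegrable F volume c d := hF.intervalIntegrable c d
  rw [intervalIntegral.integral_sub ((by fun_prop : Continuous _).intervalIntegrable _ _)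
    ((by fun_prop : Continuous _).intervalIntegrable _ _)]
  simp only [intervalIntegral.integral_comp_add_right, intervalIntegral.integral_comp_add_left]
  simpa only [zero_add] using
    intervalIntegral.integral_interval_sub_interval_comm' (h_int _ _) (h_int _ _) (h_int _ _)

variable [CompleteSpace E]

theorem exists_memLp_sub_eq_integral_add [SFinite μ] (hp : 1 ≤ p) (hF : Continuous F)
    (hδ : 0 < δ) (hFp : ∀ θ ∈ Ioo 0 δ, MemLp (fun t => F (t + θ) - F t) p μ) :
    ∃ g G : ℝ → E, Continuous g ∧ Continuous G ∧ MemLp g p μ ∧ MemLp G p μ ∧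
      ∀ t, F t - F 0 = (∫ s in (0 : ℝ)..t, g s) + (G 0 - G t) := by
  obtain ⟨a, ha, b, hab, hbδ, n, hn⟩ := exists_Icc_eLpNorm_shift_sub_le hF hδ hFp
  have hba : b - a ≠ 0 := sub_ne_zero.2 hab.ne'
  have h_avg (t : ℝ) : ∫ θ in a..b, (F (t + θ) - F t) =
      (∫ θ in a..b, F (t + θ)) - (b - a) • F t := by
    rw [intervalIntegral.integral_sub ((by fun_prop : Continuous _).intervalIntegrable _ _)
      intervalIntegrable_const, intervalIntegral.integral_const]
  refine ⟨fun t => (b - a)⁻¹ • (F (t + b) - F (t + a)),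
    fun t => (b - a)⁻¹ • ∫ θ in a..b, (F (t + θ) - F t), by fun_prop, ?_, ?_, ?_, fun t => ?_⟩
  · exact (intervalIntegral.continuous_parametric_intervalIntegral_of_continuous'
      (by fun_prop) a b).const_smul _
  · have h_sub := (hFp b ⟨ha.trans hab, hbδ⟩).sub (hFp a ⟨ha, hab.trans hbδ⟩)
    simp only [Pi.sub_def, sub_sub_sub_cancel_right] at h_sub
    exact h_sub.const_smul _
  · exact (memLp_intervalIntegral_of_eLpNorm_le hp (by fun_prop) hab.le
      (ENNReal.natCast_ne_top n) hn).const_smul _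
  · simp only [intervalIntegral.integral_smul, integral_shift_sub_shift hF, h_avg]
    simp only [smul_sub, inv_smul_smul₀ hba]
    abel

end Shift

section Resolvent

theorem enorm_signedSetIntegral_le (ν : SignedMeasure ℝ) (g : ℝ → ℝ) (A : Set ℝ) :
    ‖signedSetIntegral ν g A‖ₑ ≤ ∫⁻ s in A, ‖g s‖ₑ ∂ν.totalVariation := by
  rw [SignedMeasure.totalVariation, Measure.restrict_add, lintegral_add_measure]
  exact enorm_sub_le.trans (add_le_add (enorm_integral_le_lintegral_enorm _)
    (enorm_integral_le_lintegral_enorm _))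

theorem integrableOn_of_eq_signedSetIntegral {ν : SignedMeasure ℝ} {r r' : ℝ → ℝ}
    (hr' : AEStronglyMeasurable r' (volume.restrict (Ici 0))) (hr : IntegrableOn r (Ici 0))
    (hres : ∀ᵐ t ∂volume.restrict (Ioi 0),
      r' t = signedSetIntegral ν (fun s => r (t - s)) (Icc 0 t)) :
    IntegrableOn r' (Ici 0) := by
  let h : ℝ → ℝ := (Ici 0).indicator r
  have hh : MemLp h 1 := memLp_one_iff_integrable.2 (hr.integrable_indicator measurableSet_Ici)
  refine memLp_one_iff_integrable.1 ⟨hr', lt_of_le_of_lt ?_ (ENNReal.mul_lt_top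
    (measure_lt_top ν.totalVariation univ) hh.2)⟩
  refine le_trans ?_ (eLpNorm_lintegral_enorm_sub_le le_rfl hh.1 ν.totalVariation)
  refine le_trans (eLpNorm_mono_enorm_ae ?_) (eLpNorm_mono_measure _ Measure.restrict_le_self)
  rw [← restrict_Ioi_eq_restrict_Ici]
  filter_upwards [hres] with t ht
  calc ‖r' t‖ₑ ≤ ∫⁻ s in Icc 0 t, ‖r (t - s)‖ₑ ∂ν.totalVariation :=
        ht ▸ enorm_signedSetIntegral_le ν _ _
    _ = ∫⁻ s in Icc 0 t, ‖h (t - s)‖ₑ ∂ν.totalVariation :=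
        setLIntegral_congr_fun measurableSet_Icc fun s hs => by
          simp only [h, indicator_of_mem (mem_Ici.2 (sub_nonneg.2 hs.2))]
    _ ≤ ∫⁻ s, ‖h (t - s)‖ₑ ∂ν.totalVariation := setLIntegral_le_lintegral _ _

theorem integrableOn_abs_rpow_iff_memLp_ofReal {α : Type*} [MeasurableSpace α] {μ : Measure α}
    {s : Set α} {g : α → ℝ} {p : ℝ} (hp : 0 < p) (hg : AEStronglyMeasurable g (μ.restrict s)) :
    IntegrableOn (fun t => |g t| ^ p) s μ ↔ MemLp g (ENNReal.ofReal p) (μ.restrict s) := by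
  rw [← integrable_norm_rpow_iff hg (ENNReal.ofReal_pos.2 hp).ne' ENNReal.ofReal_ne_top,
    ENNReal.toReal_ofReal hp.le]
  rfl

variable {E : Type*} [NormedAddCommGroup E] {f : ℝ → E}

theorem intervalIntegrable_of_locallyIntegrableOn_Ici {a b c : ℝ}
    (hf : LocallyIntegrableOn f (Ici a)) (hb : a ≤ b) (hc : a ≤ c) :
    IntervalIntegrable f volume b c :=
  (hf.integrableOn_compact_subset (fun _ hs => (le_min hb hc).trans hs.1)
    isCompact_uIcc).intervalIntegrable

variable [NormedSpace ℝ E]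

theorem continuousOn_primitive_Ici {a : ℝ} (hf : LocallyIntegrableOn f (Ici a)) :
    ContinuousOn (fun t => ∫ s in a..t, f s) (Ici a) := fun t ht => by
  have ht' : a ≤ t + 1 := (mem_Ici.1 ht).trans (le_add_of_nonneg_right zero_le_one)
  have h_Icc := intervalIntegral.continuousOn_primitive_interval'
    (intervalIntegrable_of_locallyIntegrableOn_Ici hf le_rfl ht') left_mem_uIcc
  rw [uIcc_of_le ht'] at h_Icc
  exact (h_Icc t ⟨ht, (lt_add_one t).le⟩).mono_of_mem_nhdsWithin
    (inter_mem_nhdsWithin _ (Iic_mem_nhds (lt_add_one t)))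

theorem primitive_sub_primitive {a s t : ℝ} (hf : LocallyIntegrableOn f (Ici a)) (hs : a ≤ s)
    (ht : a ≤ t) : (∫ u in a..t, f u) - ∫ u in a..s, f u = ∫ u in s..t, f u :=
  intervalIntegral.integral_interval_sub_left
    (intervalIntegrable_of_locallyIntegrableOn_Ici hf le_rfl ht)
    (intervalIntegrable_of_locallyIntegrableOn_Ici hf le_rfl hs)

theorem continuousOn_integral_shift {a θ : ℝ} (hf : LocallyIntegrableOn f (Ici a)) (hθ : 0 ≤ θ) :
    ContinuousOn (fun t => ∫ s in t..t + θ, f s) (Ici a) := by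
  have hθ_maps : MapsTo (fun t => t + θ) (Ici a) (Ici a) := fun t ht =>
    (mem_Ici.1 ht).trans (le_add_of_nonneg_right hθ)
  have h_prim := continuousOn_primitive_Ici hf
  exact ((h_prim.comp (by fun_prop) hθ_maps).sub h_prim).congr fun t ht =>
    (primitive_sub_primitive hf ht (hθ_maps ht)).symm

variable [CompleteSpace E] {p : ℝ≥0∞} {δ : ℝ}

theorem exists_memLp_primitive_eq (hp : 1 ≤ p) (hf : LocallyIntegrableOn f (Ici 0)) (hδ : 0 < δ)
    (hfp : ∀ θ ∈ Ioo 0 δ, MemLp (fun t => ∫ s in t..t + θ, f s) p (volume.restrict (Ici 0))) :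
    ∃ g G : ℝ → E, Continuous g ∧ Continuous G ∧ MemLp g p (volume.restrict (Ici 0)) ∧
      MemLp G p (volume.restrict (Ici 0)) ∧
      ∀ t ≥ 0, ∫ s in (0 : ℝ)..t, f s = (∫ s in (0 : ℝ)..t, g s) + (G 0 - G t) := by
  let F : ℝ → E := fun t => ∫ s in (0 : ℝ)..max t 0, f s
  have hF : Continuous F := (continuousOn_primitive_Ici hf).comp_continuous
    (f := fun t => max t 0) (by fun_prop) fun t => le_max_right t 0
  have hF_eq (t : ℝ) (ht : 0 ≤ t) : F t = ∫ s in (0 : ℝ)..t, f s := by simp only [F, max_eq_left ht]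
  have hFp (θ : ℝ) (hθ : θ ∈ Ioo 0 δ) :
      MemLp (fun t => F (t + θ) - F t) p (volume.restrict (Ici 0)) := by
    refine (hfp θ hθ).ae_eq ?_
    filter_upwards [ae_restrict_mem measurableSet_Ici] with t ht
    have htθ : 0 ≤ t + θ := add_nonneg ht hθ.1.le
    rw [hF_eq t ht, hF_eq _ htθ, primitive_sub_primitive hf ht htθ]
  obtain ⟨g, G, hg, hG, hgp, hGp, hFgG⟩ := exists_memLp_sub_eq_integral_add hp hF hδ hFp
  refine ⟨g, G, hg, hG, hgp, hGp, fun t ht => ?_⟩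
  rw [← hFgG, hF_eq t ht, hF_eq 0 le_rfl, intervalIntegral.integral_same, sub_zero]

theorem interval_average_Lp_implies_solution_Lp_general (hp : 1 ≤ p)
    (hf : LocallyIntegrableOn f (Ici 0)) {r r' : ℝ → ℝ} (hr : IntegrableOn r (Ici 0))
    (hr' : IntegrableOn r' (Ici 0)) (hrr' : ∀ t ≥ 0, r t = r 0 + ∫ s in (0 : ℝ)..t, r' s)
    (hδ : 0 < δ)
    (hfp : ∀ θ ∈ Ioo 0 δ, MemLp (fun t => ∫ s in t..t + θ, f s) p (volume.restrict (Ici 0)))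
    (ξ : E) :
    MemLp (fun t => r t • ξ + ∫ s in (0 : ℝ)..t, r (t - s) • f s) p (volume.restrict (Ici 0)) := by
  obtain ⟨g, G, hg, hG, hgp, hGp, hfgG⟩ := exists_memLp_primitive_eq hp hf hδ hfp
  have h_free : MemLp (fun t => r t • (ξ + G 0)) p (volume.restrict (Ici 0)) :=
    (memLp_top_const (ξ + G 0)).smul (memLp_of_integrableOn_of_integrableOn_deriv hp hr hr' hrr')
  refine MemLp.ae_eq ?_ (((h_free.add (memLp_integral_smul_sub hp hr hgp)).sub
    (hGp.const_smul (r 0))).sub (memLp_integral_smul_sub hp hr' hGp))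
  filter_upwards [ae_restrict_mem measurableSet_Ici] with t ht
  simp only [Pi.add_apply, Pi.sub_apply, Pi.smul_apply]
  rw [integral_smul_eq_of_primitive_eq ht
    (intervalIntegrable_of_locallyIntegrableOn_Ici hr'.locallyIntegrableOn le_rfl ht)
    (intervalIntegrable_of_locallyIntegrableOn_Ici hf le_rfl ht) hg hG
    (fun u hu => hrr' u hu.1) fun u hu => hfgG u hu.1]
  module

end Resolvent

/-- (A) ⟹ (B) of Theorem 2.3: if the differential resolvent `r` of the
finite signed Borel measure `ν` on `[0,∞)` is integrable on `[0,∞)`, and each interval average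
`t ↦ ∫_t^{t+θ} f(s) ds`, `θ ∈ (0,1]`, is in `L^p([0,∞))`, then for every initial condition
`ξ ∈ ℝ` the solution `x(t) = r(t) ξ + ∫_0^t r(t-s) f(s) ds` is in `L^p([0,∞))`. -/
theorem interval_average_Lp_implies_solution_Lp
    (p : ℝ) (hp : 1 ≤ p)
    (ν : MeasureTheory.SignedMeasure ℝ)
    (hν : ν.restrict (Iio 0) = 0)
    (f : ℝ → ℝ)
    (hf : LocallyIntegrableOn f (Ici 0))
    (r r' : ℝ → ℝ)
    (hr'loc : LocallyIntegrableOn r' (Ici 0))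
    (hr0 : r 0 = 1)
    (hFTC : ∀ t ≥ (0:ℝ), r t = 1 + ∫ s in (0:ℝ)..t, r' s)
    (hres : ∀ᵐ t ∂(volume.restrict (Ioi (0:ℝ))),
      r' t = signedSetIntegral ν (fun s => r (t - s)) (Icc 0 t))
    (hrL1 : IntegrableOn r (Ici 0))
    (hFp : ∀ θ ∈ Ioc (0:ℝ) 1,
      IntegrableOn (fun t => |∫ s in t..(t + θ), f s| ^ p) (Ici 0)) :
    ∀ ξ : ℝ,
      IntegrableOn (fun t => |r t * ξ + ∫ s in (0:ℝ)..t, r (t - s) * f s| ^ p) (Ici 0) := by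
  intro ξ
  have hr'L1 := integrableOn_of_eq_signedSetIntegral hr'loc.aestronglyMeasurable hrL1 hres
  have hp0 : 0 < p := one_pos.trans_le hp
  have h_sol := interval_average_Lp_implies_solution_Lp_general (ENNReal.one_le_ofReal.2 hp) hf hrL1
    hr'L1 (hr0 ▸ hFTC) one_pos (fun θ hθ => (integrableOn_abs_rpow_iff_memLp_ofReal hp0
      ((continuousOn_integral_shift hf hθ.1.le).aestronglyMeasurable measurableSet_Ici)).1
        (hFp θ ⟨hθ.1, hθ.2.le⟩)) ξ
  exact (integrableOn_abs_rpow_iff_memLp_ofReal hp0 h_sol.1).2 h_sol
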